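/- (Functional adjoint sensitivity.) Assume: (i) for every ω ∈ Ω there exist μ > 0 and a neighborhood of ω on which h ↦ L_in(ω',h) is μ-strongly convex for every ω' in that neighborhood; (ii) h ↦ L_in(ω,h) is finite-valued and Fréchet differentiable on H for every ω; (iii) (ω,h) ↦ ∂_h L_in(ω,h) is Hadamard differentiable on Ω × H; (iv) L_out : Ω × H → ℝ is jointly Fréchet differentiable. Then the total objective F(ω) := L_out(ω, h*_ω) is differentiable with gradient ∇F(ω) = g_ω + B_ω a*_ω, where g_ω := ∂_ω L_out(ω,h*_ω), d_ω := ∂_h L_out(ω,h*_ω), B_ω := ∂_{ω,h}L_in(ω,h*_ω), C_ω := ∂²_h L_in(ω,h*_ω), and the adjoint function a*_ω := −C_ω^{-1} d_ω ∈ H is the unique minimizer over a ∈ H of the strongly convex quadratic L_adj(ω,a) := (1/2)⟨a, C_ω a⟩_H + ⟨a, d_ω⟩_H. -/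

import Mathlib

open Filter Topology RealInnerProductSpace

/-- Hadamard differentiability of `L` at `a` with differential `D`. -/
def HadamardDiffAt {A B : Type*} [NormedAddCommGroup A] [NormedSpace ℝ A]
    [NormedAddCommGroup B] [NormedSpace ℝ B] (L : A → B) (a : A) (D : A →L[ℝ] B) : Prop :=
  ∀ (u : ℕ → A) (ulim : A) (t : ℕ → ℝ),
    Tendsto u atTop (nhds ulim) → (∀ n, t n ≠ 0) → Tendsto t atTop (nhds 0) →
    Tendsto (fun n => ‖(t n)⁻¹ • (L (a + t n • u n) - L a) - D ulim‖) atTop (nhds 0)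

/-- `f` is `μ`-strongly convex if `h ↦ f h - (μ/2)‖h‖²` is convex. -/
def StronglyConvex {H : Type*} [NormedAddCommGroup H] [NormedSpace ℝ H]
    (μ : ℝ) (f : H → ℝ) : Prop :=
  ConvexOn ℝ Set.univ fun h => f h - μ / 2 * ‖h‖ ^ 2

/-!
Where `h ↦ L_in(ω', h)` is `μ`-strongly convex, the gradient controls the distance to the minimizer:
`μ ‖h*_ω' - h‖ ≤ ‖∂_h L_in(ω', h)‖`. Testing this at `ω' = ω + t u` and `h = h*_ω + t v` with
`B_ωᵀ u + C_ω v = 0`, the gradient is `o(t)` by Hadamard differentiability, so `h*` is Hadamard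
differentiable with differential `-C_ω⁻¹ B_ωᵀ`. The chain rule and the symmetry of `C_ω` then turn
`⟪d_ω, -C_ω⁻¹ B_ωᵀ u⟫` into `⟪B_ω a*_ω, u⟫`. Symmetry holds because on every two-dimensional affine
subspace Hadamard and Fréchet differentiability agree, which reduces it to the symmetry of second
Fréchet derivatives.
-/

namespace HadamardDiffAt

variable {A B K : Type*} [NormedAddCommGroup A] [NormedSpace ℝ A] [NormedAddCommGroup B]
  [NormedSpace ℝ B] [NormedAddCommGroup K] [NormedSpace ℝ K] {L : A → B} {a : A} {D : A →L[ℝ] B}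

theorem tendsto (hL : HadamardDiffAt L a D) {u : ℕ → A} {v : A} {t : ℕ → ℝ}
    (hu : Tendsto u atTop (𝓝 v)) (ht₀ : ∀ n, t n ≠ 0) (ht : Tendsto t atTop (𝓝 0)) :
    Tendsto (fun n => (t n)⁻¹ • (L (a + t n • u n) - L a)) atTop (𝓝 (D v)) :=
  tendsto_iff_norm_sub_tendsto_zero.2 (hL u v t hu ht₀ ht)

theorem of_hasFDerivAt (hL : HasFDerivAt L D a) : HadamardDiffAt L a D := by
  intro u v t hu ht₀ ht
  have hstep : Tendsto (fun n => t n • u n) atTop (𝓝 0) := by simpa using ht.smul hu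
  have hdir : Tendsto (fun n => (t n)⁻¹ • t n • u n) atTop (𝓝 v) := by
    simpa only [inv_smul_smul₀ (ht₀ _)] using hu
  exact tendsto_iff_norm_sub_tendsto_zero.1
    (hL.hasFDerivWithinAt.lim hstep (.of_forall fun _ => Set.mem_univ _) hdir)

theorem comp {M : B → K} {D' : B →L[ℝ] K} (hM : HadamardDiffAt M (L a) D')
    (hL : HadamardDiffAt L a D) : HadamardDiffAt (fun x => M (L x)) a (D' ∘L D) := by
  intro u v t hu ht₀ ht
  simpa only [smul_inv_smul₀ (ht₀ _), add_sub_cancel, ContinuousLinearMap.comp_apply] using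
    hM _ (D v) t (hL.tendsto hu ht₀ ht) ht₀ ht

theorem prodMk {M : A → K} {D' : A →L[ℝ] K} (hL : HadamardDiffAt L a D)
    (hM : HadamardDiffAt M a D') : HadamardDiffAt (fun x => (L x, M x)) a (D.prod D') := by
  intro u v t hu ht₀ ht
  exact tendsto_iff_norm_sub_tendsto_zero.1
    ((hL.tendsto hu ht₀ ht).prodMk_nhds (hM.tendsto hu ht₀ ht))

theorem tendsto_remainder (hL : HadamardDiffAt L a D) {u : ℕ → A} {v : A} {t : ℕ → ℝ}
    (hu : Tendsto u atTop (𝓝 v)) (ht₀ : ∀ n, t n ≠ 0) (ht : Tendsto t atTop (𝓝 0)) :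
    Tendsto (fun n => (t n)⁻¹ • (L (a + t n • u n) - L a - D (t n • u n))) atTop (𝓝 0) := by
  have hD : Tendsto (fun n => D (u n)) atTop (𝓝 (D v)) := (D.continuous.tendsto v).comp hu
  simpa only [smul_sub, map_smul, inv_smul_smul₀ (ht₀ _), sub_self] using
    (hL.tendsto hu ht₀ ht).sub hD

theorem hasFDerivAt [FiniteDimensional ℝ A] (hL : HadamardDiffAt L a D) : HasFDerivAt L D a := by
  rw [hasFDerivAt_iff_isLittleO_nhds_zero, Asymptotics.isLittleO_iff]
  by_contra! ⟨c, hc, hfreq⟩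
  obtain ⟨x, hx, hlarge⟩ := exists_seq_forall_of_frequently hfreq
  have hx₀ : ∀ n, ‖x n‖ ≠ 0 := fun n h₀ => by
    simpa [norm_eq_zero.1 h₀] using hlarge n
  have : ProperSpace A := FiniteDimensional.proper ℝ A
  obtain ⟨u, -, φ, hφ, hu⟩ := (isCompact_sphere (0 : A) 1).tendsto_subseq
    (x := fun n => ‖x n‖⁻¹ • x n) fun n => by simp [norm_smul, hx₀ n]
  have ht : Tendsto (fun n => ‖x (φ n)‖) atTop (𝓝 0) := by
    simpa using (hx.comp hφ.tendsto_atTop).norm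
  have hsmall := (hL.tendsto_remainder hu (fun n => hx₀ (φ n)) ht).norm
  simp only [Function.comp_apply, smul_inv_smul₀ (hx₀ _), norm_zero] at hsmall
  refine (ge_of_tendsto' hsmall fun n => ?_).not_gt hc
  rw [norm_smul, norm_inv, norm_norm,
    le_inv_mul_iff₀ ((norm_nonneg _).lt_of_ne' (hx₀ (φ n))), mul_comm]
  exact (hlarge (φ n)).le

theorem of_errorBound {G : A × B → K} {x : A → B} {D : A × B →L[ℝ] K} {S : A →L[ℝ] B} {μ : ℝ}
    (hμ : 0 < μ) (hG : HadamardDiffAt G (a, x a) D) (hroot : G (a, x a) = 0)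
    (hbound : ∀ᶠ a' in 𝓝 a, ∀ b, μ * ‖x a' - b‖ ≤ ‖G (a', b)‖) (hS : ∀ u, D (u, S u) = 0) :
    HadamardDiffAt x a S := by
  intro u v t hu ht₀ ht
  have hres : Tendsto (fun n => ‖(t n)⁻¹ • G (a + t n • u n, x a + t n • S v)‖) atTop (𝓝 0) := by
    simpa [hroot, hS] using
      (hG.tendsto (hu.prodMk_nhds (tendsto_const_nhds (x := S v))) ht₀ ht).norm
  have hnear : Tendsto (fun n => a + t n • u n) atTop (𝓝 a) := by
    simpa using (ht.smul hu).const_add a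
  refine squeeze_zero' (.of_forall fun n => norm_nonneg _) ?_ (by simpa using hres.const_mul μ⁻¹)
  filter_upwards [hnear.eventually hbound] with n hn
  have hquot : (t n)⁻¹ • (x (a + t n • u n) - x a) - S v =
      (t n)⁻¹ • (x (a + t n • u n) - (x a + t n • S v)) := by
    rw [← sub_sub, smul_sub _ (_ - _) (t n • S v), inv_smul_smul₀ (ht₀ n)]
  rw [hquot, norm_smul, norm_smul, le_inv_mul_iff₀ hμ, mul_left_comm]
  gcongr
  exact hn _

theorem partial_snd {G : A × B → K} {b : B} {D : A × B →L[ℝ] K} (hG : HadamardDiffAt G (a, b) D) :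
    HadamardDiffAt (fun y => G (a, y)) b (D ∘L .inr ℝ A B) :=
  hG.comp (of_hasFDerivAt (hasFDerivAt_prodMk_right a b))

end HadamardDiffAt

theorem add_fderiv_sub_le_of_convexOn_univ {E : Type*} [NormedAddCommGroup E] [NormedSpace ℝ E]
    {f : E → ℝ} {f' : E →L[ℝ] ℝ} {x : E} (hf : ConvexOn ℝ Set.univ f) (hx : HasFDerivAt f f' x)
    (y : E) : f x + f' (y - x) ≤ f y := by
  let line : ℝ →ᵃ[ℝ] E := AffineMap.lineMap x y
  have hconv : ConvexOn ℝ Set.univ (f ∘ line) := hf.comp_affineMap line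
  have hderiv : HasDerivAt (f ∘ line) (f' (y - x)) 0 :=
    HasFDerivAt.comp_hasDerivAt 0 (by simpa [line] using hx) AffineMap.hasDerivAt_lineMap
  have hslope := hconv.le_slope_of_hasDerivAt (Set.mem_univ 0) (Set.mem_univ 1) one_pos hderiv
  simp only [slope_def_field, Function.comp_apply, line, AffineMap.lineMap_apply_one,
    AffineMap.lineMap_apply_zero, sub_zero, div_one] at hslope
  linarith

section Hilbert

variable {H : Type*} [NormedAddCommGroup H] [InnerProductSpace ℝ H]

namespace StronglyConvex

variable {f : H → ℝ} {μ : ℝ}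

theorem strongConvexOn (hf : StronglyConvex μ f) : StrongConvexOn Set.univ μ f :=
  strongConvexOn_iff_convex.2 hf

theorem eq_of_forall_le (hf : StronglyConvex μ f) (hμ : 0 < μ) {x y : H} (hx : ∀ z, f x ≤ f z)
    (hy : ∀ z, f y ≤ f z) : x = y :=
  (hf.strongConvexOn.strictConvexOn hμ).eq_of_isMinOn (fun z _ => hx z) (fun z _ => hy z)
    (Set.mem_univ x) (Set.mem_univ y)

theorem norm_sub_sq_le_of_forall_le (hf : StronglyConvex μ f) {m : ℝ} (hm : ∀ z, m ≤ f z)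
    (x y : H) : μ / 4 * ‖x - y‖ ^ 2 ≤ (f x - m) + (f y - m) := by
  obtain ⟨-, hchord⟩ := hf.strongConvexOn
  have hmid := hchord (Set.mem_univ x) (Set.mem_univ y)
    (by norm_num : (0 : ℝ) ≤ 1 / 2) (by norm_num) (add_halves 1)
  simp only [smul_eq_mul] at hmid
  linarith [hm ((1 / 2 : ℝ) • x + (1 / 2 : ℝ) • y)]

theorem cauchySeq_of_tendsto (hf : StronglyConvex μ f) (hμ : 0 < μ) {m : ℝ} (hm : ∀ z, m ≤ f z)
    {x : ℕ → H} (hx : Tendsto (fun n => f (x n)) atTop (𝓝 m)) : CauchySeq x := by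
  rw [Metric.cauchySeq_iff]
  intro ε hε
  have hgap : m < m + μ / 8 * ε ^ 2 := lt_add_of_pos_right m (by positivity)
  obtain ⟨N, hN⟩ := eventually_atTop.1 (hx.eventually_lt_const hgap)
  refine ⟨N, fun i hi j hj => ?_⟩
  have hsq : μ / 4 * ‖x i - x j‖ ^ 2 < μ / 4 * ε ^ 2 := by
    linarith [hf.norm_sub_sq_le_of_forall_le hm (x i) (x j), hN i hi, hN j hj]
  rw [dist_eq_norm]
  exact lt_of_pow_lt_pow_left₀ 2 hε.le (lt_of_mul_lt_mul_left hsq (by positivity))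

variable [CompleteSpace H]

theorem exists_forall_le_of_bddBelow (hf : StronglyConvex μ f) (hμ : 0 < μ)
    (hcont : Continuous f) (hbdd : BddBelow (Set.range f)) : ∃ x, ∀ y, f x ≤ f y := by
  have hle : ∀ y, sInf (Set.range f) ≤ f y := fun y => csInf_le hbdd ⟨y, rfl⟩
  obtain ⟨s, -, hs, hrange⟩ := exists_seq_tendsto_sInf (Set.range_nonempty f) hbdd
  choose x hx using hrange
  obtain rfl : (fun n => f (x n)) = s := funext hx
  obtain ⟨z, hz⟩ := cauchySeq_tendsto_of_complete (hf.cauchySeq_of_tendsto hμ hle hs)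
  have hmin : f z = sInf (Set.range f) := tendsto_nhds_unique ((hcont.tendsto z).comp hz) hs
  exact ⟨z, fun y => hmin.trans_le (hle y)⟩

theorem add_inner_add_sq_le (hf : StronglyConvex μ f) {x g : H} (hx : HasGradientAt f g x)
    (y : H) : f x + ⟪g, y - x⟫ + μ / 2 * ‖y - x‖ ^ 2 ≤ f y := by
  have hfirst := add_fderiv_sub_le_of_convexOn_univ hf
    (hx.hasFDerivAt.sub ((hasStrictFDerivAt_norm_sq x).hasFDerivAt.const_mul (μ / 2))) y
  have hnorm : ‖y‖ ^ 2 = ‖x‖ ^ 2 + 2 * ⟪x, y - x⟫ + ‖y - x‖ ^ 2 := by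
    rw [← norm_add_sq_real, add_sub_cancel]
  simp only [hnorm, sub_apply, smul_apply,
    InnerProductSpace.toDual_apply_apply, innerSL_apply_apply, smul_eq_mul, nsmul_eq_mul] at hfirst
  push_cast at hfirst
  linarith

theorem bddBelow_range (hf : StronglyConvex μ f) (hμ : 0 < μ) {x g : H}
    (hx : HasGradientAt f g x) : BddBelow (Set.range f) := by
  refine ⟨f x - ‖g‖ ^ 2 / (2 * μ), ?_⟩
  rintro _ ⟨y, rfl⟩
  have hinner : -(‖g‖ * ‖y - x‖) ≤ ⟪g, y - x⟫ := neg_le_of_abs_le (abs_real_inner_le_norm _ _)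
  have hsquare : ‖g‖ ^ 2 / (2 * μ) - ‖g‖ * ‖y - x‖ + μ / 2 * ‖y - x‖ ^ 2 =
      (‖g‖ - μ * ‖y - x‖) ^ 2 / (2 * μ) := by
    field_simp
    ring
  have hnonneg : 0 ≤ (‖g‖ - μ * ‖y - x‖) ^ 2 / (2 * μ) := by positivity
  linarith [hf.add_inner_add_sq_le hx y]

theorem exists_forall_le (hf : StronglyConvex μ f) (hμ : 0 < μ) (hdiff : Differentiable ℝ f) :
    ∃ x, ∀ y, f x ≤ f y :=
  hf.exists_forall_le_of_bddBelow hμ hdiff.continuous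
    (hf.bddBelow_range hμ (hdiff 0).hasGradientAt)

theorem mul_norm_sub_sq_le_inner (hf : StronglyConvex μ f) {x y gx gy : H}
    (hx : HasGradientAt f gx x) (hy : HasGradientAt f gy y) :
    μ * ‖x - y‖ ^ 2 ≤ ⟪gx - gy, x - y⟫ := by
  have hxy := hf.add_inner_add_sq_le hx y
  have hyx := hf.add_inner_add_sq_le hy x
  rw [← neg_sub x y, inner_neg_right, norm_neg] at hxy
  rw [inner_sub_left]
  linarith

theorem mul_norm_sub_le (hf : StronglyConvex μ f) {x y gx gy : H}
    (hx : HasGradientAt f gx x) (hy : HasGradientAt f gy y) :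
    μ * ‖x - y‖ ≤ ‖gx - gy‖ := by
  rcases (norm_nonneg (x - y)).eq_or_lt with hzero | hpos
  · simp [← hzero]
  · refine le_of_mul_le_mul_right ?_ hpos
    calc μ * ‖x - y‖ * ‖x - y‖ = μ * ‖x - y‖ ^ 2 := by ring
      _ ≤ ⟪gx - gy, x - y⟫ := hf.mul_norm_sub_sq_le_inner hx hy
      _ ≤ ‖gx - gy‖ * ‖x - y‖ := real_inner_le_norm _ _

theorem mul_norm_sq_le_inner_of_hadamardDiffAt (hf : StronglyConvex μ f) {G : H → H}
    (hG : ∀ h, HasGradientAt f (G h) h) {h : H} {C : H →L[ℝ] H} (hC : HadamardDiffAt G h C)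
    (v : H) : μ * ‖v‖ ^ 2 ≤ ⟪C v, v⟫ := by
  have ht : ∀ n : ℕ, (0 : ℝ) < 1 / ((n : ℝ) + 1) := fun n => by positivity
  have hlim := (hC.tendsto (tendsto_const_nhds (x := v)) (fun n => (ht n).ne')
    tendsto_one_div_add_atTop_nhds_zero_nat).inner (𝕜 := ℝ) (tendsto_const_nhds (x := v))
  refine ge_of_tendsto' hlim fun n => ?_
  have htn := ht n
  generalize 1 / ((n : ℝ) + 1) = t at htn ⊢
  have hmono := hf.mul_norm_sub_sq_le_inner (hG (h + t • v)) (hG h)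
  rw [add_sub_cancel_left, inner_smul_right, norm_smul, mul_pow, Real.norm_eq_abs, sq_abs] at hmono
  rw [real_inner_smul_left, le_inv_mul_iff₀ htn]
  refine le_of_mul_le_mul_left ?_ htn
  linarith

end StronglyConvex

section Gradient

variable [CompleteSpace H]

theorem eq_zero_of_hasGradientAt_of_forall_le {f : H → ℝ} {x g : H} (hg : HasGradientAt f g x)
    (hx : ∀ y, f x ≤ f y) : g = 0 := by
  have hmin : IsLocalMin f x := .of_forall hx
  simpa using hmin.hasFDerivAt_eq_zero hg.hasFDerivAt

theorem isSymmetric_of_hadamardDiffAt_gradient {f : H → ℝ} {G : H → H}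
    (hG : ∀ h, HasGradientAt f (G h) h) {h : H} {C : H →L[ℝ] H} (hC : HadamardDiffAt G h C) :
    (C : H →ₗ[ℝ] H).IsSymmetric := by
  intro u v
  let T : ℝ × ℝ →L[ℝ] H :=
    (ContinuousLinearMap.fst ℝ ℝ ℝ).smulRight u + (ContinuousLinearMap.snd ℝ ℝ ℝ).smulRight v
  let restrict : H →L[ℝ] (ℝ × ℝ →L[ℝ] ℝ) :=
    ((ContinuousLinearMap.compL ℝ (ℝ × ℝ) H ℝ).flip T) ∘L innerSL ℝ
  have hrestrict : ∀ w p, restrict w p = ⟪w, T p⟫ := fun _ _ => rfl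
  have haffine : ∀ p, HasFDerivAt (fun p => h + T p) T p := fun p => T.hasFDerivAt.const_add h
  have hfirst : ∀ p, HasFDerivAt (fun p => f (h + T p)) (restrict (G (h + T p))) p :=
    fun p => (hG (h + T p)).hasFDerivAt.comp p (haffine p)
  have hplane : HadamardDiffAt (fun p => G (h + T p)) 0 (C ∘L T) :=
    HadamardDiffAt.comp (by simpa using hC) (.of_hasFDerivAt (haffine 0))
  have hsecond : HasFDerivAt (fun p => restrict (G (h + T p))) (restrict ∘L C ∘L T) 0 :=
    restrict.hasFDerivAt.comp 0 hplane.hasFDerivAt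
  have hsymm := second_derivative_symmetric hfirst hsecond (1, 0) (0, 1)
  rw [ContinuousLinearMap.coe_coe, ← real_inner_comm u]
  simpa [hrestrict, T] using hsymm

theorem exists_continuousLinearEquiv_of_coercive {μ : ℝ} (hμ : 0 < μ) {C : H →L[ℝ] H}
    (hC : ∀ v, μ * ‖v‖ ^ 2 ≤ ⟪C v, v⟫) : ∃ e : H ≃L[ℝ] H, ∀ v, e v = C v := by
  have hcoercive : IsCoercive (innerSL ℝ ∘L C) :=
    ⟨μ, hμ, fun v => (by ring : μ * ‖v‖ * ‖v‖ = μ * ‖v‖ ^ 2).trans_le (hC v)⟩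
  exact ⟨hcoercive.continuousLinearEquivOfBilin, fun v => ext_inner_right ℝ fun w =>
    hcoercive.continuousLinearEquivOfBilin_apply v w⟩

theorem exists_hadamardDiffAt_minimizer {A : Type*} [NormedAddCommGroup A] [NormedSpace ℝ A]
    {f : A → H → ℝ} {G : A → H → H} {x : A → H} {a : A} {D : A × H →L[ℝ] H} {μ : ℝ}
    (hμ : 0 < μ) (hf : ∀ᶠ a' in 𝓝 a, StronglyConvex μ (f a'))
    (hG : ∀ a' h, HasGradientAt (f a') (G a' h) h) (hx : ∀ a' h, f a' (x a') ≤ f a' h)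
    (hD : HadamardDiffAt (fun q : A × H => G q.1 q.2) (a, x a) D) :
    ∃ S : A →L[ℝ] H, HadamardDiffAt x a S ∧
      ∀ u, (D ∘L .inl ℝ A H) u + (D ∘L .inr ℝ A H) (S u) = 0 := by
  obtain ⟨e, he⟩ := exists_continuousLinearEquiv_of_coercive hμ
    (hf.self_of_nhds.mul_norm_sq_le_inner_of_hadamardDiffAt (hG a) hD.partial_snd)
  have hS : ∀ u, (D ∘L .inl ℝ A H) u + (D ∘L .inr ℝ A H) (-e.symm ((D ∘L .inl ℝ A H) u)) = 0 :=
    fun u => by rw [← he, map_neg, e.apply_symm_apply, add_neg_cancel]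
  have hroot : ∀ a', G a' (x a') = 0 := fun a' =>
    eq_zero_of_hasGradientAt_of_forall_le (hG a' (x a')) (hx a')
  refine ⟨-((e.symm : H →L[ℝ] H) ∘L D ∘L .inl ℝ A H),
    .of_errorBound hμ hD (hroot a) ?_ fun u => by simpa [← map_add] using hS u, hS⟩
  filter_upwards [hf] with a' ha' h
  simpa [hroot a'] using ha'.mul_norm_sub_le (hG a' (x a')) (hG a' h)

end Gradient

/-- The adjoint objective `L_adj(a) = ½⟪a, C a⟫ + ⟪a, d⟫`, whose minimizer is the adjoint function
`-C⁻¹ d`. -/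
noncomputable def adjointObjective (C : H →L[ℝ] H) (d a : H) : ℝ :=
  (1 / 2) * ⟪a, C a⟫ + ⟪a, d⟫

namespace adjointObjective

variable {C : H →L[ℝ] H} {a d : H}

theorem eq_add_of_stationary (hC : (C : H →ₗ[ℝ] H).IsSymmetric) (ha : C a + d = 0) (b : H) :
    adjointObjective C d b = adjointObjective C d a + (1 / 2) * ⟪C (b - a), b - a⟫ := by
  have hab : ⟪C a, b⟫ = ⟪a, C b⟫ := hC a b
  simp only [adjointObjective, eq_neg_of_add_eq_zero_right ha, map_sub, inner_sub_left,
    inner_sub_right, inner_neg_right]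
  rw [real_inner_comm b (C b), real_inner_comm a (C a), real_inner_comm (C a) b,
    real_inner_comm a (C b), hab]
  ring

theorem le_of_stationary (hC : (C : H →ₗ[ℝ] H).IsSymmetric) (hnonneg : ∀ v, 0 ≤ ⟪C v, v⟫)
    (ha : C a + d = 0) (b : H) : adjointObjective C d a ≤ adjointObjective C d b := by
  rw [eq_add_of_stationary hC ha b]
  linarith [hnonneg (b - a)]

theorem eq_of_le_stationary (hC : (C : H →ₗ[ℝ] H).IsSymmetric) (hpos : ∀ v ≠ 0, 0 < ⟪C v, v⟫)
    (ha : C a + d = 0) {b : H} (hb : adjointObjective C d b ≤ adjointObjective C d a) : b = a := by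
  rw [eq_add_of_stationary hC ha b] at hb
  by_contra hne
  linarith [hpos (b - a) (sub_ne_zero.2 hne)]

theorem exists_unique_minimizer_of_coercive [CompleteSpace H] {μ : ℝ} (hμ : 0 < μ)
    (hC : (C : H →ₗ[ℝ] H).IsSymmetric) (hcoer : ∀ v, μ * ‖v‖ ^ 2 ≤ ⟪C v, v⟫) (d : H) :
    ∃ a, C a + d = 0 ∧ (∀ b, adjointObjective C d a ≤ adjointObjective C d b) ∧
      ∀ b, (∀ b', adjointObjective C d b ≤ adjointObjective C d b') → b = a := by
  obtain ⟨e, he⟩ := exists_continuousLinearEquiv_of_coercive hμ hcoer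
  have ha : C (-e.symm d) + d = 0 := by rw [← he, map_neg, e.apply_symm_apply, neg_add_cancel]
  have hnonneg : ∀ v, 0 ≤ ⟪C v, v⟫ := fun v => (by positivity : 0 ≤ μ * ‖v‖ ^ 2).trans (hcoer v)
  have hpos : ∀ v ≠ 0, 0 < ⟪C v, v⟫ := fun v hv =>
    (by positivity : 0 < μ * ‖v‖ ^ 2).trans_le (hcoer v)
  exact ⟨-e.symm d, ha, le_of_stationary hC hnonneg ha,
    fun b hb => eq_of_le_stationary hC hpos ha (hb _)⟩

end adjointObjective

end Hilbert

section Sensitivity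

variable {Ω H : Type*} [NormedAddCommGroup Ω] [InnerProductSpace ℝ Ω] [CompleteSpace Ω]
  [NormedAddCommGroup H] [InnerProductSpace ℝ H] [CompleteSpace H]

theorem hadamardDiffAt_comp_of_adjoint {F : Ω × H → ℝ} {x : Ω → H} {ω g : Ω} {a d : H}
    {B S : Ω →L[ℝ] H} {C : H →L[ℝ] H} (hC : (C : H →ₗ[ℝ] H).IsSymmetric)
    (hF : HadamardDiffAt F (ω, x ω) (innerSL ℝ g ∘L .fst ℝ Ω H + innerSL ℝ d ∘L .snd ℝ Ω H))
    (hx : HadamardDiffAt x ω S) (hS : ∀ u, B u + C (S u) = 0) (ha : C a + d = 0) :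
    HadamardDiffAt (fun ω' => F (ω', x ω')) ω
      (InnerProductSpace.toDual ℝ Ω (g + ContinuousLinearMap.adjoint B a)) := by
  have hadj : ∀ u, ⟪d, S u⟫ = ⟪a, B u⟫ := fun u => calc
    ⟪d, S u⟫ = -⟪C a, S u⟫ := by rw [eq_neg_of_add_eq_zero_right ha, inner_neg_left]
    _ = -⟪a, C (S u)⟫ := congrArg Neg.neg (hC a (S u))
    _ = ⟪a, B u⟫ := by rw [eq_neg_of_add_eq_zero_left (hS u), inner_neg_right]
  have hgraph : HadamardDiffAt (fun ω' => (ω', x ω')) ω ((ContinuousLinearMap.id ℝ Ω).prod S) :=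
    (HadamardDiffAt.of_hasFDerivAt (hasFDerivAt_id ω)).prodMk hx
  convert HadamardDiffAt.comp (L := fun ω' => (ω', x ω')) hF hgraph using 1
  ext u
  simp [ContinuousLinearMap.adjoint_inner_left, hadj]

theorem stmt3_general (Lin : Ω → H → ℝ) (gradIn : Ω → H → H)
    (hsc : ∀ ω : Ω, ∃ μ > (0 : ℝ), ∃ ε > (0 : ℝ), ∀ ω', ‖ω' - ω‖ < ε → StronglyConvex μ (Lin ω'))
    (hgrad : ∀ ω h, HasGradientAt (Lin ω) (gradIn ω h) h)
    (DG : Ω × H → (Ω × H →L[ℝ] H))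
    (hDG : ∀ p, HadamardDiffAt (fun q : Ω × H => gradIn q.1 q.2) p (DG p))
    (Lout : Ω → H → ℝ) (gOut : Ω × H → Ω) (dOut : Ω × H → H)
    (hLout : ∀ p : Ω × H, HadamardDiffAt (fun q : Ω × H => Lout q.1 q.2) p
      (innerSL ℝ (gOut p) ∘L .fst ℝ Ω H + innerSL ℝ (dOut p) ∘L .snd ℝ Ω H)) :
    ∃ hstar : Ω → H,
      (∀ ω h, Lin ω (hstar ω) ≤ Lin ω h) ∧
      (∀ ω h, (∀ h', Lin ω h ≤ Lin ω h') → h = hstar ω) ∧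
      ∀ ω, ∃ astar : H,
        (DG (ω, hstar ω) ∘L .inr ℝ Ω H) astar + dOut (ω, hstar ω) = 0 ∧
        (∀ a, adjointObjective (DG (ω, hstar ω) ∘L .inr ℝ Ω H) (dOut (ω, hstar ω)) astar ≤
          adjointObjective (DG (ω, hstar ω) ∘L .inr ℝ Ω H) (dOut (ω, hstar ω)) a) ∧
        (∀ a, (∀ a', adjointObjective (DG (ω, hstar ω) ∘L .inr ℝ Ω H) (dOut (ω, hstar ω)) a ≤
          adjointObjective (DG (ω, hstar ω) ∘L .inr ℝ Ω H) (dOut (ω, hstar ω)) a') → a = astar) ∧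
        HadamardDiffAt (fun ω' => Lout ω' (hstar ω')) ω
          (InnerProductSpace.toDual ℝ Ω (gOut (ω, hstar ω) +
            ContinuousLinearMap.adjoint (DG (ω, hstar ω) ∘L .inl ℝ Ω H) astar)) := by
  have hnear : ∀ ω, ∃ μ > (0 : ℝ), ∀ᶠ ω' in 𝓝 ω, StronglyConvex μ (Lin ω') := fun ω =>
    let ⟨μ, hμ, ε, hε, h⟩ := hsc ω
    ⟨μ, hμ, Metric.eventually_nhds_iff.2 ⟨ε, hε, fun ω' hω' => h ω' (dist_eq_norm ω' ω ▸ hω')⟩⟩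
  choose μ hμ hconv using hnear
  choose hstar hmin using fun ω => (hconv ω).self_of_nhds.exists_forall_le (hμ ω)
    fun h => (hgrad ω h).differentiableAt
  refine ⟨hstar, hmin, fun ω h hh =>
    (hconv ω).self_of_nhds.eq_of_forall_le (hμ ω) hh (hmin ω), fun ω => ?_⟩
  have hC := (hDG (ω, hstar ω)).partial_snd
  have hsymm := isSymmetric_of_hadamardDiffAt_gradient (hgrad ω) hC
  have hcoer := (hconv ω).self_of_nhds.mul_norm_sq_le_inner_of_hadamardDiffAt (hgrad ω) hC
  obtain ⟨astar, hastar, hle, hunique⟩ :=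
    adjointObjective.exists_unique_minimizer_of_coercive (hμ ω) hsymm hcoer (dOut (ω, hstar ω))
  obtain ⟨S, hhstar, hS⟩ :=
    exists_hadamardDiffAt_minimizer (hμ ω) (hconv ω) hgrad hmin (hDG (ω, hstar ω))
  exact ⟨astar, hastar, hle, hunique,
    hadamardDiffAt_comp_of_adjoint (F := fun q => Lout q.1 q.2) hsymm (hLout (ω, hstar ω)) hhstar hS
      hastar⟩

end Sensitivity

/-- **Functional adjoint sensitivity.**  Under the assumptions of the functional implicit
differentiation theorem on `L_in`, and joint Fréchet differentiability of `L_out`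
(with partial gradients `gOut ∈ ℝ^d` and `dOut ∈ H`), the total objective
`F (ω) = L_out (ω, h*_ω)` is differentiable with `∇F(ω) = g_ω + B_ω a*_ω`, where the
adjoint function `a*_ω = -C_ω⁻¹ d_ω` is the unique minimizer over `H` of the strongly
convex quadratic `a ↦ (1/2)⟪a, C_ω a⟫ + ⟪a, d_ω⟫`. -/
theorem stmt3 {d : ℕ} {H : Type*} [NormedAddCommGroup H] [InnerProductSpace ℝ H]
    [CompleteSpace H] [TopologicalSpace.SeparableSpace H]
    (Lin : EuclideanSpace ℝ (Fin d) → H → ℝ)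
    (gradIn : EuclideanSpace ℝ (Fin d) → H → H)
    (hsc : ∀ ω : EuclideanSpace ℝ (Fin d), ∃ μ > (0 : ℝ), ∃ ε > (0 : ℝ),
      ∀ ω', ‖ω' - ω‖ < ε → StronglyConvex μ (Lin ω'))
    (hgrad : ∀ ω h, HasGradientAt (Lin ω) (gradIn ω h) h)
    (DG : EuclideanSpace ℝ (Fin d) × H → (EuclideanSpace ℝ (Fin d) × H →L[ℝ] H))
    (hDG : ∀ p, HadamardDiffAt (fun q : EuclideanSpace ℝ (Fin d) × H => gradIn q.1 q.2) p (DG p))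
    -- `L_out` is jointly Fréchet differentiable with partial gradients `gOut` and `dOut`
    (Lout : EuclideanSpace ℝ (Fin d) → H → ℝ)
    (gOut : EuclideanSpace ℝ (Fin d) × H → EuclideanSpace ℝ (Fin d))
    (dOut : EuclideanSpace ℝ (Fin d) × H → H)
    (hLout : ∀ p : EuclideanSpace ℝ (Fin d) × H,
      HasFDerivAt (fun q : EuclideanSpace ℝ (Fin d) × H => Lout q.1 q.2)
        ((innerSL ℝ (gOut p)).comp (ContinuousLinearMap.fst ℝ (EuclideanSpace ℝ (Fin d)) H)
          + (innerSL ℝ (dOut p)).comp (ContinuousLinearMap.snd ℝ (EuclideanSpace ℝ (Fin d)) H))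
        p) :
    ∃ hstar : EuclideanSpace ℝ (Fin d) → H,
      (∀ ω h, Lin ω (hstar ω) ≤ Lin ω h) ∧
      (∀ ω h, (∀ h', Lin ω h ≤ Lin ω h') → h = hstar ω) ∧
      ∀ ω, ∃ astar : H,
        -- `a*_ω = -C_ω⁻¹ d_ω`, i.e. `C_ω a*_ω + d_ω = 0`
        ((DG (ω, hstar ω)).comp (ContinuousLinearMap.inr ℝ (EuclideanSpace ℝ (Fin d)) H)) astar
            + dOut (ω, hstar ω) = 0 ∧
        -- `a*_ω` minimizes the quadratic adjoint objective
        (∀ a : H,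
          (1/2) * ⟪astar, ((DG (ω, hstar ω)).comp
              (ContinuousLinearMap.inr ℝ (EuclideanSpace ℝ (Fin d)) H)) astar⟫
            + ⟪astar, dOut (ω, hstar ω)⟫ ≤
          (1/2) * ⟪a, ((DG (ω, hstar ω)).comp
              (ContinuousLinearMap.inr ℝ (EuclideanSpace ℝ (Fin d)) H)) a⟫
            + ⟪a, dOut (ω, hstar ω)⟫) ∧
        -- and it is the unique such minimizer
        (∀ a : H,
          (∀ a' : H,
            (1/2) * ⟪a, ((DG (ω, hstar ω)).comp
                (ContinuousLinearMap.inr ℝ (EuclideanSpace ℝ (Fin d)) H)) a⟫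
              + ⟪a, dOut (ω, hstar ω)⟫ ≤
            (1/2) * ⟪a', ((DG (ω, hstar ω)).comp
                (ContinuousLinearMap.inr ℝ (EuclideanSpace ℝ (Fin d)) H)) a'⟫
              + ⟪a', dOut (ω, hstar ω)⟫) → a = astar) ∧
        -- `∇F(ω) = g_ω + B_ω a*_ω`
        HasGradientAt (fun ω' => Lout ω' (hstar ω'))
          (gOut (ω, hstar ω) +
            (ContinuousLinearMap.adjoint
              ((DG (ω, hstar ω)).comp
                (ContinuousLinearMap.inl ℝ (EuclideanSpace ℝ (Fin d)) H))) astar) ω := by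
  obtain ⟨hstar, hmin, huniq, h⟩ := stmt3_general Lin gradIn hsc hgrad DG hDG Lout gOut dOut
    fun p => .of_hasFDerivAt (hLout p)
  exact ⟨hstar, hmin, huniq, fun ω => (h ω).imp fun _ h =>
    ⟨h.1, h.2.1, h.2.2.1, h.2.2.2.hasFDerivAt⟩⟩
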